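/- arXiv:1410.3166 — 2 statements merged into one kernel-verified Lean document; each statement's English description precedes it below -/
import Mathlib

section
/- For a finite-dimensional Λ-module M: socseq(M) = reverse(rad(M)) (as tuples in ℕ^{L+1}) if and only if soc_l M = J^{L-l} M as submodules of M for every 0 ≤ l ≤ L. -/
/-!
Since `Λ = K + J`, every vector annihilated by `J` lies in the socle. As `J` annihilates each layer
`J^l M / J^{l+1} M` and `J^{L+1} = 0`, induction gives `J^{L-l} M ≤ soc_l M` for all `l`. Both
filtrations start at `0`, so their terms have equal dimensions, and hence agree, exactly when their
layers have equal dimensions.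

For `Λ = K + J` and `J^{L+1} = 0`, let `V` be the span of the generators. Splitting off the first
letter of each word gives `Λ = K + VΛ`, so `ΛV ≤ VΛ` and `J^n = (ΛVΛ)^n ≤ V^n Λ`.
-/

noncomputable section

/-- The relation on the free algebra killing all products of `L+1` generators. -/
def TruncRel (K : Type*) [Field K] (r L : ℕ) :
    FreeAlgebra K (Fin r) → FreeAlgebra K (Fin r) → Prop := fun a b =>
  (∃ f : Fin (L + 1) → Fin r, a = (List.ofFn fun j => FreeAlgebra.ι K (f j)).prod) ∧ b = 0

/-- The local truncated path algebra with `r` loops and Loewy length `L+1`: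
the quotient of `K⟨X_1,…,X_r⟩` by the two-sided ideal generated by all products
of `L+1` generators. -/
def TruncAlg (K : Type*) [Field K] (r L : ℕ) : Type _ := RingQuot (TruncRel K r L)

instance (K : Type*) [Field K] (r L : ℕ) : Ring (TruncAlg K r L) :=
  inferInstanceAs (Ring (RingQuot _))

instance (K : Type*) [Field K] (r L : ℕ) : Algebra K (TruncAlg K r L) :=
  inferInstanceAs (Algebra K (RingQuot _))

/-- The images of the generators `X i` in the truncated algebra. -/
def gen (K : Type*) [Field K] (r L : ℕ) (i : Fin r) : TruncAlg K r L :=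
  RingQuot.mkAlgHom K (TruncRel K r L) (FreeAlgebra.ι K i)

/-- The two-sided ideal `J` of `Λ` generated by the images of `X_1,…,X_r`,
realized as a `K`-submodule of `Λ`. -/
def Jrad (K : Type*) [Field K] (r L : ℕ) : Submodule K (TruncAlg K r L) :=
  ⊤ * Submodule.span K (Set.range (gen K r L)) * ⊤

/-- `J^l M`, the submodule of `M` given by the action of `J^l`. -/
def jpow (K : Type*) [Field K] (r L : ℕ) (M : Type*) [AddCommGroup M] [Module K M]
    [Module (TruncAlg K r L) M] [IsScalarTower K (TruncAlg K r L) M] (l : ℕ) :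
    Submodule (TruncAlg K r L) M :=
  Submodule.span (TruncAlg K r L)
    {x : M | ∃ a ∈ (Jrad K r L ^ l : Submodule K (TruncAlg K r L)), ∃ m : M, x = a • m}

/-- The socle of a module: the supremum of all simple submodules. -/
def socle (R N : Type*) [Ring R] [AddCommGroup N] [Module R N] : Submodule R N :=
  sSup {p : Submodule R N | IsSimpleModule R ↥p}

/-- The socle series: `socSeries R M l` is `soc_{l-1} M`, so `socSeries R M 0 = soc_{-1} M = ⊥`
and `socSeries R M (l+1) = soc_l M` is the preimage in `M` of `soc (M / soc_{l-1} M)`. -/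
def socSeries (R M : Type*) [Ring R] [AddCommGroup M] [Module R M] : ℕ → Submodule R M
  | 0 => ⊥
  | l + 1 => Submodule.comap (socSeries R M l).mkQ (socle R (M ⧸ socSeries R M l))

/-- Dimension of the subquotient `q / (p ⊓ q)`; for `p ≤ q` this is `dim (q/p)`. -/
def quotDim (K M : Type*) [Field K] [AddCommGroup M] [Module K M]
    (p q : Submodule K M) : ℕ :=
  Module.finrank K (↥q ⧸ Submodule.comap q.subtype p)

/-- The radical layering `rad(M) = (dim_K J^l M / J^{l+1} M)_{l=0,…,L}`. -/
def radLayering (K : Type*) [Field K] (r L : ℕ) (M : Type*) [AddCommGroup M] [Module K M]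
    [Module (TruncAlg K r L) M] [IsScalarTower K (TruncAlg K r L) M] : Fin (L + 1) → ℕ :=
  fun l => quotDim K M ((jpow K r L M ((l : ℕ) + 1)).restrictScalars K)
    ((jpow K r L M (l : ℕ)).restrictScalars K)

/-- The socle layering `socseq(M) = (dim_K soc_l M / soc_{l-1} M)_{l=0,…,L}`. -/
def socLayering (K : Type*) [Field K] (r L : ℕ) (M : Type*) [AddCommGroup M] [Module K M]
    [Module (TruncAlg K r L) M] [IsScalarTower K (TruncAlg K r L) M] : Fin (L + 1) → ℕ :=
  fun l => quotDim K M ((socSeries (TruncAlg K r L) M (l : ℕ)).restrictScalars K)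
    ((socSeries (TruncAlg K r L) M ((l : ℕ) + 1)).restrictScalars K)

/-- The dominance order on `ℕ^{L+1}`: `a ≼ b` iff all partial sums satisfy `≤`. -/
def DomLE (L : ℕ) (a b : Fin (L + 1) → ℕ) : Prop :=
  ∀ l : Fin (L + 1), ∑ j ∈ Finset.Iic l, a j ≤ ∑ j ∈ Finset.Iic l, b j

/-- `reverse (a_0, …, a_L) = (a_L, …, a_0)`. -/
def revTuple (L : ℕ) (a : Fin (L + 1) → ℕ) : Fin (L + 1) → ℕ := fun l => a l.rev

section Filtration

variable {K V : Type*} [Field K] [AddCommGroup V] [Module K V] [FiniteDimensional K V]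

theorem quotDim_add_finrank {p q : Submodule K V} (h : p ≤ q) :
    quotDim K V p q + Module.finrank K p = Module.finrank K q := by
  rw [quotDim, ← (Submodule.comapSubtypeEquivOfLe h).finrank_eq]
  exact Submodule.finrank_quotient_add_finrank _

theorem eq_of_le_of_quotDim_eq {p q q' : Submodule K V} (hpq : p ≤ q) (hqq' : q ≤ q')
    (h : quotDim K V p q = quotDim K V p q') : q = q' := by
  refine Submodule.eq_of_le_of_finrank_eq hqq' ?_
  rw [← quotDim_add_finrank hpq, ← quotDim_add_finrank (hpq.trans hqq'), h]

theorem forall_quotDim_eq_iff_forall_eq {P Q : ℕ → Submodule K V} (hP : Monotone P)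
    (hPQ : P ≤ Q) (h₀ : P 0 = Q 0) (n : ℕ) :
    (∀ k < n, quotDim K V (P k) (P (k + 1)) = quotDim K V (Q k) (Q (k + 1))) ↔
      ∀ k < n, P (k + 1) = Q (k + 1) := by
  have h_prev (k : ℕ) (h : ∀ i < k, P (i + 1) = Q (i + 1)) : P k = Q k := by
    cases k with
    | zero => exact h₀
    | succ k => exact h k k.lt_succ_self
  refine ⟨fun h k hk ↦ ?_, fun h k hk ↦ ?_⟩
  · induction k using Nat.strong_induction_on with
    | h k ih =>
      refine eq_of_le_of_quotDim_eq (hP k.le_succ) (hPQ (k + 1)) ?_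
      rw [h k hk, h_prev k fun i hi ↦ ih i hi (hi.trans hk)]
  · rw [h k hk, h_prev k fun i hi ↦ h i (hi.trans hk)]

end Filtration

section Generators

open Submodule

variable {K A : Type*} [CommSemiring K] [Semiring A] [Algebra K A] {s : Set A}

theorem one_sup_span_mul_top_of_adjoin_eq_top (hs : Algebra.adjoin K s = ⊤) :
    (1 : Submodule K A) ⊔ span K s * ⊤ = ⊤ := by
  set S : Submodule K A := 1 ⊔ span K s * ⊤
  have h_one : (1 : A) ∈ S := mem_sup_left (mem_one.2 ⟨1, map_one _⟩)
  have h_mul : S * S ≤ S := by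
    rw [Submodule.sup_mul, one_mul, mul_assoc]
    exact sup_le le_rfl ((mul_le_mul' le_rfl le_top).trans le_sup_right)
  have h_adjoin : Algebra.adjoin K s ≤ S.toSubalgebra h_one fun _ _ ha hb ↦
      h_mul (mul_mem_mul ha hb) := by
    refine Algebra.adjoin_le fun a ha ↦ mem_sup_right ?_
    simpa using mul_mem_mul (subset_span ha) (mem_top (R := K) (x := (1 : A)))
  rw [hs] at h_adjoin
  exact eq_top_iff.2 fun a _ ↦ h_adjoin Algebra.mem_top

theorem top_mul_span_le_of_adjoin_eq_top (hs : Algebra.adjoin K s = ⊤) :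
    ⊤ * span K s ≤ span K s * ⊤ := by
  calc ⊤ * span K s
      = (1 ⊔ span K s * ⊤) * span K s := by rw [one_sup_span_mul_top_of_adjoin_eq_top hs]
    _ = span K s ⊔ span K s * (⊤ * span K s) := by
        rw [Submodule.sup_mul, one_mul, mul_assoc]
    _ ≤ span K s * ⊤ :=
        sup_le (le_mul_of_one_le_right' le_top) (mul_le_mul' le_rfl le_top)

theorem pow_top_mul_span_mul_top_le_of_adjoin_eq_top (hs : Algebra.adjoin K s = ⊤) (n : ℕ) :
    (⊤ * span K s * ⊤) ^ n ≤ span K s ^ n * ⊤ := by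
  induction n with
  | zero => simp
  | succ n ih =>
    calc (⊤ * span K s * ⊤) ^ (n + 1)
        ≤ span K s ^ n * ⊤ * (⊤ * span K s * ⊤) := by
          rw [pow_succ]
          exact mul_le_mul' ih le_rfl
      _ = span K s ^ n * (⊤ * ⊤ * span K s) * ⊤ := by simp only [mul_assoc]
      _ ≤ span K s ^ n * (⊤ * span K s) * ⊤ := by gcongr; exact le_top
      _ ≤ span K s ^ n * (span K s * ⊤) * ⊤ :=
          mul_le_mul' (mul_le_mul' le_rfl (top_mul_span_le_of_adjoin_eq_top hs)) le_rfl
      _ = span K s ^ (n + 1) * (⊤ * ⊤) := by simp only [pow_succ, mul_assoc]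
      _ ≤ span K s ^ (n + 1) * ⊤ := by gcongr; exact le_top

end Generators

section Socle

variable {K A M : Type*} [Field K] [Ring A] [Algebra K A] [AddCommGroup M] [Module A M]
  {J : Submodule K A}

theorem isSimpleModule_span_singleton_of_forall_smul_eq_zero (hJ : 1 ⊔ J = ⊤) {x : M}
    (hx₀ : x ≠ 0) (hx : ∀ j ∈ J, j • x = 0) : IsSimpleModule A (Submodule.span A {x}) := by
  rw [isSimpleModule_iff_isAtom]
  refine ⟨by simpa using hx₀, fun p hp ↦ ?_⟩
  by_contra hp₀
  obtain ⟨y, hyp, hy₀⟩ := Submodule.exists_mem_ne_zero_of_ne_bot hp₀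
  obtain ⟨a, rfl⟩ := Submodule.mem_span_singleton.1 (hp.le hyp)
  obtain ⟨_, hc, j, hj, rfl⟩ := Submodule.mem_sup.1 (hJ ▸ Submodule.mem_top : a ∈ 1 ⊔ J)
  obtain ⟨c, rfl⟩ := Submodule.mem_one.1 hc
  rw [add_smul, hx j hj, add_zero] at hyp hy₀
  have hc₀ : c ≠ 0 := by
    rintro rfl
    simp at hy₀
  have hxp : x ∈ p := by
    simpa [smul_smul, ← map_mul, hc₀] using p.smul_mem (algebraMap K A c⁻¹) hyp
  exact hp.not_ge ((Submodule.span_singleton_le_iff_mem x p).2 hxp)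

theorem mem_socle_of_forall_smul_eq_zero (hJ : 1 ⊔ J = ⊤) {x : M} (hx : ∀ j ∈ J, j • x = 0) :
    x ∈ socle A M := by
  obtain rfl | hx₀ := eq_or_ne x 0
  · exact zero_mem _
  · have h_simple := isSimpleModule_span_singleton_of_forall_smul_eq_zero hJ hx₀ hx
    exact le_sSup (a := Submodule.span A {x}) h_simple (Submodule.mem_span_singleton_self x)

theorem le_socSeries_of_smul_mem (hJ : 1 ⊔ J = ⊤) {F : ℕ → Submodule A M} (h₀ : F 0 = ⊥)
    (hF : ∀ k, ∀ j ∈ J, ∀ x ∈ F (k + 1), j • x ∈ F k) : F ≤ socSeries A M := by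
  intro k
  induction k with
  | zero => exact h₀.le
  | succ k ih =>
    intro x hx
    refine mem_socle_of_forall_smul_eq_zero hJ fun j hj ↦ ?_
    rw [← map_smul, Submodule.mkQ_apply, Submodule.Quotient.mk_eq_zero]
    exact ih (hF k j hj x hx)

end Socle

section TruncAlg

variable (K : Type*) [Field K] (r L : ℕ)

/-- The quotient map `K⟨X_1,…,X_r⟩ → Λ`, with values in `TruncAlg K r L` and not in the underlying
`RingQuot`. -/
def truncProj : FreeAlgebra K (Fin r) →ₐ[K] TruncAlg K r L :=
  RingQuot.mkAlgHom K (TruncRel K r L)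

theorem truncProj_surjective : Function.Surjective (truncProj K r L) :=
  RingQuot.mkAlgHom_surjective K (TruncRel K r L)

theorem adjoin_range_gen : Algebra.adjoin K (Set.range (gen K r L)) = ⊤ := by
  have h_range : Set.range (gen K r L) = truncProj K r L '' Set.range (FreeAlgebra.ι K) :=
    Set.range_comp _ _
  rw [h_range, ← AlgHom.map_adjoin, FreeAlgebra.adjoin_range_ι, Algebra.map_top,
    AlgHom.range_eq_top]
  exact truncProj_surjective K r L

theorem prod_ofFn_gen_eq_zero (f : Fin (L + 1) → Fin r) :
    (List.ofFn fun j ↦ gen K r L (f j)).prod = 0 := by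
  have h_rel : truncProj K r L (List.ofFn fun j ↦ FreeAlgebra.ι K (f j)).prod =
      truncProj K r L 0 :=
    RingQuot.mkAlgHom_rel K ⟨⟨f, rfl⟩, rfl⟩
  rw [map_list_prod, List.map_ofFn, map_zero] at h_rel
  exact h_rel

theorem span_range_gen_pow_eq_bot : Submodule.span K (Set.range (gen K r L)) ^ (L + 1) = ⊥ := by
  rw [Submodule.span_pow, Submodule.span_eq_bot]
  intro x hx
  obtain ⟨g, rfl⟩ := Set.mem_pow.1 hx
  choose f hf using fun j ↦ (g j).2
  simpa only [hf] using prod_ofFn_gen_eq_zero K r L f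

theorem Jrad_pow_eq_bot : Jrad K r L ^ (L + 1) = ⊥ := by
  have h := pow_top_mul_span_mul_top_le_of_adjoin_eq_top (adjoin_range_gen K r L) (L + 1)
  rwa [span_range_gen_pow_eq_bot, Submodule.bot_mul, le_bot_iff] at h

theorem one_sup_Jrad_eq_top : 1 ⊔ Jrad K r L = ⊤ := by
  refine eq_top_iff.2 ?_
  rw [← one_sup_span_mul_top_of_adjoin_eq_top (adjoin_range_gen K r L), Jrad, mul_assoc]
  exact sup_le_sup_left (le_mul_of_one_le_left' le_top) 1

variable {K r L} in
theorem mul_mem_Jrad {a : TruncAlg K r L} (ha : a ∈ Jrad K r L) (b : TruncAlg K r L) :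
    a * b ∈ Jrad K r L := by
  have h : Jrad K r L * ⊤ ≤ Jrad K r L := by
    rw [Jrad, mul_assoc _ ⊤ ⊤]
    exact mul_le_mul' le_rfl le_top
  exact h (Submodule.mul_mem_mul ha Submodule.mem_top)

variable (M : Type*) [AddCommGroup M] [Module K M] [Module (TruncAlg K r L) M]
  [IsScalarTower K (TruncAlg K r L) M]

theorem jpow_eq_bot : jpow K r L M (L + 1) = ⊥ := by
  rw [jpow, Submodule.span_eq_bot]
  rintro _ ⟨a, ha, m, rfl⟩
  rw [Jrad_pow_eq_bot, Submodule.mem_bot] at ha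
  rw [ha, zero_smul]

theorem jpow_antitone : Antitone (jpow K r L M) := by
  refine antitone_nat_of_succ_le fun l ↦ Submodule.span_le.2 ?_
  rintro _ ⟨a, ha, m, rfl⟩
  rw [pow_succ] at ha
  induction ha using Submodule.mul_induction_on' with
  | mem_mul_mem b hb j _ =>
    rw [mul_smul]
    exact Submodule.subset_span ⟨b, hb, j • m, rfl⟩
  | add a _ b _ ha hb =>
    rw [add_smul]
    exact add_mem ha hb

variable {K r L M} in
theorem smul_mem_jpow_succ {l : ℕ} {j : TruncAlg K r L} (hj : j ∈ Jrad K r L) {x : M}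
    (hx : x ∈ jpow K r L M l) : j • x ∈ jpow K r L M (l + 1) := by
  induction hx using Submodule.span_induction generalizing j with
  | mem x hx =>
    obtain ⟨a, ha, m, rfl⟩ := hx
    refine Submodule.subset_span ⟨j * a, ?_, m, smul_smul j a m⟩
    rw [pow_succ']
    exact Submodule.mul_mem_mul hj ha
  | zero => simp
  | add x y _ _ hx hy =>
    rw [smul_add]
    exact add_mem (hx hj) (hy hj)
  | smul b x _ hx =>
    rw [smul_smul]
    exact hx (mul_mem_Jrad hj b)

theorem jpow_le_socSeries (k : ℕ) :
    jpow K r L M (L + 1 - k) ≤ socSeries (TruncAlg K r L) M k := by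
  refine le_socSeries_of_smul_mem (F := fun k ↦ jpow K r L M (L + 1 - k))
    (one_sup_Jrad_eq_top K r L) (jpow_eq_bot K r L M) (fun k j hj x hx ↦ ?_) k
  exact jpow_antitone K r L M (by lia) (smul_mem_jpow_succ hj hx)

end TruncAlg

theorem stmt8_general (K : Type*) [Field K] (r L : ℕ) (M : Type*) [AddCommGroup M] [Module K M]
    [Module (TruncAlg K r L) M] [IsScalarTower K (TruncAlg K r L) M] [FiniteDimensional K M] :
    socLayering K r L M = revTuple L (radLayering K r L M) ↔
      ∀ l : Fin (L + 1),
        socSeries (TruncAlg K r L) M ((l : ℕ) + 1) = jpow K r L M (L - (l : ℕ)) := by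
  let P k := (jpow K r L M (L + 1 - k)).restrictScalars K
  let Q k := (socSeries (TruncAlg K r L) M k).restrictScalars K
  have hP : Monotone P := fun _ _ h ↦ jpow_antitone K r L M (Nat.sub_le_sub_left h _)
  have hPQ : P ≤ Q := jpow_le_socSeries K r L M
  have h₀ : P 0 = Q 0 := congrArg (Submodule.restrictScalars K) (jpow_eq_bot K r L M)
  have h_rad (l : Fin (L + 1)) :
      revTuple L (radLayering K r L M) l = quotDim K M (P l) (P (l + 1)) := by
    have hl : L + 1 - (l + 1 : ℕ) + 1 = L + 1 - l := by lia
    simp only [revTuple, radLayering, Fin.val_rev, hl, P]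
  have h_eq (l : ℕ) : P (l + 1) = Q (l + 1) ↔
      socSeries (TruncAlg K r L) M (l + 1) = jpow K r L M (L - l) := by
    rw [Submodule.restrictScalars_inj, Nat.add_sub_add_right, eq_comm]
  calc socLayering K r L M = revTuple L (radLayering K r L M)
      ↔ ∀ l : Fin (L + 1), quotDim K M (P l) (P (l + 1)) = quotDim K M (Q l) (Q (l + 1)) := by
        simp only [← h_rad, eq_comm, funext_iff, socLayering, Q]
    _ ↔ ∀ l : Fin (L + 1), P (l + 1) = Q (l + 1) := by
        simpa only [Fin.forall_iff] using forall_quotDim_eq_iff_forall_eq hP hPQ h₀ (L + 1)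
    _ ↔ _ := forall_congr' fun l ↦ h_eq l

/-- `socseq M = reverse (rad M)` iff `soc_l M = J^{L-l} M` as submodules of `M`
for every `0 ≤ l ≤ L`. -/
theorem stmt8 (K : Type) [Field K] [IsAlgClosed K] (r L : ℕ) (hr : 0 < r) (hL : 0 < L)
    (M : Type) [AddCommGroup M] [Module K M] [Module (TruncAlg K r L) M]
    [IsScalarTower K (TruncAlg K r L) M] [FiniteDimensional K M] :
    socLayering K r L M = revTuple L (radLayering K r L M) ↔
      ∀ l : Fin (L + 1),
        socSeries (TruncAlg K r L) M ((l : ℕ) + 1) = jpow K r L M (L - (l : ℕ)) :=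
  stmt8_general K r L M
end
end

section
/- Let X be a noetherian topological space, A a partially ordered set, and f : X → A an upper semicontinuous map whose image f(X) is well partially ordered. Then for every minimal element a of f(X), the closure of f^{-1}(a) in X is a nonempty finite union of irreducible components of X; that is, there is a nonempty finite collection of irreducible components of X whose union equals the closure of f^{-1}(a). -/
/-- A map `f : X → A` to a poset is upper semicontinuous if the preimage of every
up-set `[a, ∞)` is closed. -/
def UpperSemicontinuousToPoset {X A : Type*} [TopologicalSpace X] [PartialOrder A]
    (f : X → A) : Prop :=
  ∀ a : A, IsClosed (f ⁻¹' {b | a ≤ b})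

/-- A subset `S` of a poset is well partially ordered if it contains no infinite strictly
descending chain and every nonempty subset of `S` has only finitely many minimal elements. -/
def WellPartiallyOrdered {A : Type*} [PartialOrder A] (S : Set A) : Prop :=
  (¬ ∃ g : ℕ → A, (∀ n, g n ∈ S) ∧ ∀ n, g (n + 1) < g n) ∧
  (∀ T : Set A, T ⊆ S → T.Nonempty → {a ∈ T | ∀ b ∈ T, b ≤ a → b = a}.Finite)

/-
Well partial ordering makes every up-set of `f(X)` generated by finitely many elements, so the
preimage of any up-set of `A` is a finite union of closed sets `f ⁻¹ [m, ∞)`. Taking complements,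
`f ⁻¹ (-∞, a]` is open, and it equals `f ⁻¹(a)` when `a` is minimal in `f(X)`. An open set is dense
in every irreducible component it meets, so if only finitely many components meet it, its closure
is their union.
-/

open Set

section Order

theorem exists_le_minimal_of_isWF {A : Type*} [Preorder A] {S : Set A} (hS : S.IsWF) {a : A}
    (ha : a ∈ S) : ∃ m ≤ a, Minimal (· ∈ S) m := by
  have : WellFoundedLT S := ⟨hS⟩
  obtain ⟨⟨m, hmS⟩, hma, -, hmin⟩ :=
    exists_minimal_le_of_wellFoundedLT (fun _ : S => True) ⟨a, ha⟩ trivial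
  exact ⟨m, hma, hmS, fun b hb hbm => hmin (y := ⟨b, hb⟩) trivial hbm⟩

variable {A : Type*} [PartialOrder A] {S T : Set A}

theorem WellPartiallyOrdered.isWF (hS : WellPartiallyOrdered S) : S.IsWF :=
  isWF_iff_no_descending_seq.2 fun g hg hgS => hS.1 ⟨g, hgS, fun n => hg n.lt_succ_self⟩

theorem WellPartiallyOrdered.finite_setOf_minimal (hS : WellPartiallyOrdered S) (hTS : T ⊆ S) :
    {m | Minimal (· ∈ T) m}.Finite := by
  rcases T.eq_empty_or_nonempty with rfl | hT
  · exact finite_empty.subset fun _ hm => hm.prop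
  · exact (hS.2 T hTS hT).subset fun _ hm => ⟨hm.prop, fun _ hb hbm => hm.eq_of_le hb hbm⟩

theorem preimage_Iic_eq_preimage_singleton {X : Type*} {f : X → A} {a : A}
    (ha : Minimal (· ∈ range f) a) : f ⁻¹' Iic a = f ⁻¹' {a} :=
  Subset.antisymm (fun x hx => ha.eq_of_le (mem_range_self x) hx) fun _ hx => hx.le

end Order

section OpenFiber

variable {X A : Type*} [TopologicalSpace X] [PartialOrder A] {f : X → A}

theorem UpperSemicontinuousToPoset.isClosed_preimage_of_isUpperSet
    (hf : UpperSemicontinuousToPoset f) (hwpo : WellPartiallyOrdered (range f)) {U : Set A}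
    (hU : IsUpperSet U) : IsClosed (f ⁻¹' U) := by
  let M : Set A := {m | Minimal (· ∈ U ∩ range f) m}
  have hM : M.Finite := hwpo.finite_setOf_minimal inter_subset_right
  have preimage_eq : f ⁻¹' U = ⋃ m ∈ M, f ⁻¹' {b | m ≤ b} := by
    apply Subset.antisymm
    · intro x hx
      obtain ⟨m, hmx, hm⟩ :=
        exists_le_minimal_of_isWF (hwpo.isWF.mono inter_subset_right) ⟨hx, mem_range_self x⟩
      exact mem_biUnion hm hmx
    · exact iUnion₂_subset fun m hm x hmx => hU hmx hm.prop.1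
  rw [preimage_eq]
  exact hM.isClosed_biUnion fun m _ => hf m

theorem UpperSemicontinuousToPoset.isOpen_preimage_singleton
    (hf : UpperSemicontinuousToPoset f) (hwpo : WellPartiallyOrdered (range f)) {a : A}
    (ha : Minimal (· ∈ range f) a) : IsOpen (f ⁻¹' {a}) := by
  rw [← preimage_Iic_eq_preimage_singleton ha, ← isClosed_compl_iff, ← preimage_compl]
  exact hf.isClosed_preimage_of_isUpperSet hwpo (isLowerSet_Iic a).compl

end OpenFiber

section IrreducibleComponents

variable {X : Type*} [TopologicalSpace X] {U : Set X}

theorem sUnion_irreducibleComponents_inter_nonempty_eq_closure (hU : IsOpen U)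
    (hfin : {C ∈ irreducibleComponents X | (C ∩ U).Nonempty}.Finite) :
    ⋃₀ {C ∈ irreducibleComponents X | (C ∩ U).Nonempty} = closure U := by
  apply Subset.antisymm
  · refine sUnion_subset fun C ⟨hC, hCU⟩ => ?_
    calc C ⊆ closure (C ∩ U) :=
          subset_closure_inter_of_isPreirreducible_of_isOpen hC.1.isPreirreducible hU hCU
      _ ⊆ closure U := closure_mono inter_subset_right
  · refine closure_minimal (fun x hx => ?_) ?_
    · exact ⟨irreducibleComponent x, ⟨irreducibleComponent_mem_irreducibleComponents x, x,
        mem_irreducibleComponent, hx⟩, mem_irreducibleComponent⟩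
    · rw [sUnion_eq_biUnion]
      exact hfin.isClosed_biUnion fun C hC => isClosed_of_mem_irreducibleComponents C hC.1

end IrreducibleComponents

theorem stmt13_general {X A : Type*} [TopologicalSpace X] [PartialOrder A]
    (hX : (irreducibleComponents X).Finite) {f : X → A} (hf : UpperSemicontinuousToPoset f)
    (hwpo : WellPartiallyOrdered (range f)) {a : A} (ha : Minimal (· ∈ range f) a) :
    ∃ S : Set (Set X), S.Finite ∧ S.Nonempty ∧ (∀ C ∈ S, C ∈ irreducibleComponents X) ∧
      ⋃₀ S = closure (f ⁻¹' {a}) := by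
  have hopen : IsOpen (f ⁻¹' {a}) := hf.isOpen_preimage_singleton hwpo ha
  have hfin : {C ∈ irreducibleComponents X | (C ∩ f ⁻¹' {a}).Nonempty}.Finite :=
    hX.subset (sep_subset _ _)
  have hunion := sUnion_irreducibleComponents_inter_nonempty_eq_closure hopen hfin
  have hne : (⋃₀ {C ∈ irreducibleComponents X | (C ∩ f ⁻¹' {a}).Nonempty}).Nonempty := by
    rw [hunion, closure_nonempty_iff]
    exact ha.prop
  exact ⟨_, hfin, hne.of_sUnion, fun C hC => hC.1, hunion⟩

/-- If `X` is a noetherian topological space and `f : X → A` an upper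
semicontinuous map with well partially ordered image, then for every minimal element `a`
of `f(X)` the closure of `f ⁻¹(a)` is a nonempty finite union of irreducible components
of `X`. -/
theorem stmt13 {X A : Type*} [TopologicalSpace X] [TopologicalSpace.NoetherianSpace X]
    [PartialOrder A] (f : X → A)
    (hf : UpperSemicontinuousToPoset f) (hwpo : WellPartiallyOrdered (Set.range f))
    (a : A) (ha : a ∈ Set.range f) (hmin : ∀ b ∈ Set.range f, b ≤ a → b = a) :
    ∃ S : Set (Set X), S.Finite ∧ S.Nonempty ∧ (∀ C ∈ S, C ∈ irreducibleComponents X) ∧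
      ⋃₀ S = closure (f ⁻¹' {a}) :=
  stmt13_general TopologicalSpace.NoetherianSpace.finite_irreducibleComponents hf hwpo
    ⟨ha, fun b hb hba => (hmin b hb hba).ge⟩
end
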